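/- Let n ≥ 1, C > 0, and let K ⊆ ℝⁿ be a convex body with K ⊆ C√n·B_n. Let σ > 0 with σ² ≤ C²·n, and set α = σ²/(2C²n). Define F(s) = ∫_K exp(−‖x‖²/(2s)) dx for s > 0. Then F(σ²/(1+α)) · F(σ²/(1−α)) < (1 + σ²/(C²n)) · F(σ²)². -/

import Mathlib

open MeasureTheory

/-! By Prékopa–Leindler, the joint convexity of `(x, s) ↦ ‖x‖² / s` makes
`F(s) = ∫_K exp(-‖x‖² / (2s)) dx` log-concave in the variance `s`. The variances `s / (1 + α)` and
`s / (1 - α)` have mean `s / (1 - α²)`, so `F(s / (1 + α)) F(s / (1 - α)) ≤ F(s / (1 - α²))²`. On a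
ball of radius `R`, raising the variance from `s` to `s / (1 - α²)` increases the Gaussian exponent
by at most `α² R² / (2s)`, hence the product is at most `exp(α² R² / s) F(s)²`. At the accelerated
rate `α = s / (2R²)` the exponential factor is `exp(s / (4R²)) < 1 + s / R²`. -/

open Set
open scoped ENNReal NNReal Pointwise

theorem volume_Ioi_zero_inter_ofReal_lt (y : ℝ≥0∞) :
    volume (Ioi 0 ∩ {t : ℝ | ENNReal.ofReal t < y}) = y := by
  cases y with
  | top => simp
  | coe y =>
    have hIoo : Ioi 0 ∩ {t : ℝ | ENNReal.ofReal t < y} = Ioo 0 (y : ℝ) := by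
      ext t
      refine and_congr_right fun ht ↦ ?_
      rw [mem_ofPred_eq, ← ENNReal.ofReal_coe_nnreal, ENNReal.ofReal_lt_ofReal_iff_of_nonneg ht.le]
    simp [hIoo]

theorem lintegral_eq_lintegral_meas_ofReal_lt {α : Type*} [MeasurableSpace α] {μ : Measure α}
    [SFinite μ] {f : α → ℝ≥0∞} (hf : Measurable f) :
    ∫⁻ x, f x ∂μ = ∫⁻ t in Ioi (0 : ℝ), μ {x | ENNReal.ofReal t < f x} := by
  have hS : MeasurableSet {p : α × ℝ | ENNReal.ofReal p.2 < f p.1} :=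
    measurableSet_lt measurable_snd.ennreal_ofReal (hf.comp measurable_fst)
  calc ∫⁻ x, f x ∂μ
      = ∫⁻ x, (volume.restrict (Ioi 0)) {t : ℝ | ENNReal.ofReal t < f x} ∂μ := by
        refine lintegral_congr fun x ↦ ?_
        rw [Measure.restrict_apply' measurableSet_Ioi, inter_comm, volume_Ioi_zero_inter_ofReal_lt]
    _ = (μ.prod (volume.restrict (Ioi 0))) {p | ENNReal.ofReal p.2 < f p.1} :=
        (Measure.prod_apply hS).symm
    _ = ∫⁻ t in Ioi (0 : ℝ), μ {x | ENNReal.ofReal t < f x} := Measure.prod_apply_symm hS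

theorem lintegral_eq_iSup_lintegral_min_natCast {α : Type*} [MeasurableSpace α] {μ : Measure α}
    {f : α → ℝ≥0∞} (hf : Measurable f) :
    ∫⁻ x, f x ∂μ = ⨆ N : ℕ, ∫⁻ x, min (f x) N ∂μ := by
  rw [← lintegral_iSup (fun N ↦ hf.min measurable_const)
    fun M N hMN x ↦ min_le_min_left _ (mod_cast hMN)]
  simp only [← inf_iSup_eq, ENNReal.iSup_natCast, inf_top_eq]

theorem ennreal_geom_mean_le_arith_mean2_weighted {a b : ℝ} (ha : 0 < a) (hb : 0 < b)
    (hab : a + b = 1) (p q : ℝ≥0∞) :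
    p ^ a * q ^ b ≤ ENNReal.ofReal a * p + ENNReal.ofReal b * q := by
  rcases eq_or_ne p ⊤ with rfl | hp
  · simp [ENNReal.mul_top, ha]
  rcases eq_or_ne q ⊤ with rfl | hq
  · simp [ENNReal.mul_top, hb]
  lift p to ℝ≥0 using hp
  lift q to ℝ≥0 using hq
  lift a to ℝ≥0 using ha.le
  lift b to ℝ≥0 using hb.le
  rw [ENNReal.ofReal_coe_nnreal, ENNReal.ofReal_coe_nnreal, ← ENNReal.coe_rpow_of_nonneg _ ha.le,
    ← ENNReal.coe_rpow_of_nonneg _ hb.le]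
  exact_mod_cast NNReal.geom_mean_le_arith_mean2_weighted a b p q (mod_cast hab)

theorem volume_add_volume_le_volume_add_of_isCompact {A B : Set ℝ} (hA : IsCompact A)
    (hB : IsCompact B) (hA₀ : A.Nonempty) (hB₀ : B.Nonempty) :
    volume A + volume B ≤ volume (A + B) := by
  -- The translates `b + A` and `a + B` inside `A + B` meet only at `a + b`, the top of one and the
  -- bottom of the other.
  obtain ⟨a, haA, ha⟩ := hA.exists_isGreatest hA₀
  obtain ⟨b, hbB, hb⟩ := hB.exists_isLeast hB₀
  have hdisj : AEDisjoint volume (b +ᵥ A) (a +ᵥ B) := by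
    refine measure_mono_null (t := {a + b}) ?_ Real.volume_singleton
    rintro _ ⟨⟨x, hx, rfl⟩, ⟨y, hy, hxy⟩⟩
    have := ha hx
    have := hb hy
    simp only [vadd_eq_add, mem_singleton_iff] at hxy ⊢
    linarith
  calc volume A + volume B
      = volume (b +ᵥ A) + volume (a +ᵥ B) := by rw [measure_vadd, measure_vadd]
    _ = volume ((b +ᵥ A) ∪ (a +ᵥ B)) :=
        (measure_union₀ (hB.vadd a).measurableSet.nullMeasurableSet hdisj).symm
    _ ≤ volume (A + B) :=
        measure_mono (union_subset (add_comm B A ▸ vadd_set_subset_add hbB)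
          (vadd_set_subset_add haA))

theorem volume_add_volume_le_volume_add {A B : Set ℝ} (hA : MeasurableSet A)
    (hB : MeasurableSet B) (hA₀ : A.Nonempty) (hB₀ : B.Nonempty) :
    volume A + volume B ≤ volume (A + B) := by
  obtain ⟨a, ha⟩ := hA₀
  obtain ⟨b, hb⟩ := hB₀
  rw [hA.measure_eq_iSup_isCompact, hB.measure_eq_iSup_isCompact]
  simp only [iSup_and']
  refine ENNReal.biSup_add_biSup_le' ⟨∅, by simp⟩ ⟨∅, by simp⟩ fun S ⟨hSA, hS⟩ T ⟨hTB, hT⟩ ↦ ?_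
  calc volume S + volume T
      ≤ volume (insert a S) + volume (insert b T) := by gcongr <;> exact subset_insert _ _
    _ ≤ volume (insert a S + insert b T) :=
        volume_add_volume_le_volume_add_of_isCompact (hS.insert a) (hT.insert b)
          (insert_nonempty _ _) (insert_nonempty _ _)
    _ ≤ volume (A + B) := by
        gcongr
        exacts [insert_subset ha hSA, insert_subset hb hTB]

theorem ofReal_mul_volume_add_le_volume_smul_add_smul {A B : Set ℝ} (hA : MeasurableSet A)
    (hB : MeasurableSet B) (hA₀ : A.Nonempty) (hB₀ : B.Nonempty) {a b : ℝ} (ha : 0 ≤ a)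
    (hb : 0 ≤ b) :
    ENNReal.ofReal a * volume A + ENNReal.ofReal b * volume B ≤ volume (a • A + b • B) := by
  have hsmul {c : ℝ} (hc : 0 ≤ c) (S : Set ℝ) : ENNReal.ofReal c * volume S = volume (c • S) := by
    rw [Measure.addHaar_smul_of_nonneg _ hc, Module.finrank_self, pow_one]
  rw [hsmul ha, hsmul hb]
  exact volume_add_volume_le_volume_add (hA.const_smul₀ a) (hB.const_smul₀ b) hA₀.smul_set
    hB₀.smul_set

section Real

variable {a b : ℝ} {f g h : ℝ → ℝ≥0∞}

theorem lintegral_add_lintegral_le_of_iSup_eq (ha : 0 < a) (hb : 0 < b) (hab : a + b = 1)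
    (hf : Measurable f) (hg : Measurable g) (hh : Measurable h) (hsup : ⨆ x, f x = ⨆ x, g x)
    (hfgh : ∀ x y, f x ^ a * g y ^ b ≤ h (a • x + b • y)) :
    ENNReal.ofReal a * (∫⁻ x, f x) + ENNReal.ofReal b * (∫⁻ x, g x) ≤ ∫⁻ x, h x := by
  have hmeas {u : ℝ → ℝ≥0∞} : Measurable fun t : ℝ ↦ volume {x | ENNReal.ofReal t < u x} :=
    Antitone.measurable fun s t hst ↦ measure_mono fun x ↦ (ENNReal.ofReal_le_ofReal hst).trans_lt
  rw [lintegral_eq_lintegral_meas_ofReal_lt hf, lintegral_eq_lintegral_meas_ofReal_lt hg,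
    lintegral_eq_lintegral_meas_ofReal_lt hh, ← lintegral_const_mul _ hmeas,
    ← lintegral_const_mul _ hmeas, ← lintegral_add_left (hmeas.const_mul _)]
  refine lintegral_mono fun t ↦ ?_
  -- One-dimensional Brunn–Minkowski needs nonempty sets: as the suprema agree, the superlevel sets
  -- of `f` and `g` at height `t` are both nonempty or both empty.
  rcases lt_or_ge (ENNReal.ofReal t) (⨆ x, f x) with ht | ht
  · have hf_nonempty : {x | ENNReal.ofReal t < f x}.Nonempty := lt_iSup_iff.1 ht
    have hg_nonempty : {x | ENNReal.ofReal t < g x}.Nonempty := lt_iSup_iff.1 (ht.trans_eq hsup)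
    refine (ofReal_mul_volume_add_le_volume_smul_add_smul (measurableSet_lt measurable_const hf)
      (measurableSet_lt measurable_const hg) hf_nonempty hg_nonempty ha.le hb.le).trans
      (measure_mono ?_)
    rintro _ ⟨_, ⟨x, hx, rfl⟩, _, ⟨y, hy, rfl⟩, rfl⟩
    calc ENNReal.ofReal t
        = ENNReal.ofReal t ^ a * ENNReal.ofReal t ^ b := by
          rw [← ENNReal.rpow_add_of_nonneg _ _ ha.le hb.le, hab, ENNReal.rpow_one]
      _ < f x ^ a * g y ^ b :=
          ENNReal.mul_lt_mul (ENNReal.rpow_lt_rpow hx ha) (ENNReal.rpow_lt_rpow hy hb)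
      _ ≤ h (a • x + b • y) := hfgh x y
  · have hf_empty : {x | ENNReal.ofReal t < f x} = ∅ :=
      eq_empty_of_forall_notMem fun x ↦ ((le_iSup f x).trans ht).not_gt
    have hg_empty : {x | ENNReal.ofReal t < g x} = ∅ :=
      eq_empty_of_forall_notMem fun x ↦ ((le_iSup g x).trans (hsup ▸ ht)).not_gt
    simp [hf_empty, hg_empty]

theorem rpow_lintegral_mul_rpow_lintegral_le_of_iSup_ne_top (ha : 0 < a) (hb : 0 < b)
    (hab : a + b = 1) (hf : Measurable f) (hg : Measurable g) (hh : Measurable h)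
    (hf_top : ⨆ x, f x ≠ ⊤) (hg_top : ⨆ x, g x ≠ ⊤)
    (hfgh : ∀ x y, f x ^ a * g y ^ b ≤ h (a • x + b • y)) :
    (∫⁻ x, f x) ^ a * (∫⁻ x, g x) ^ b ≤ ∫⁻ x, h x := by
  rcases eq_or_ne (⨆ x, f x) 0 with hf₀ | hf₀
  · simp [ENNReal.iSup_eq_zero.1 hf₀, ha]
  rcases eq_or_ne (⨆ x, g x) 0 with hg₀ | hg₀
  · simp [ENNReal.iSup_eq_zero.1 hg₀, hb]
  set S := ⨆ x, f x
  set T := ⨆ x, g x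
  have hSa : S ^ a ≠ 0 := by simp [hf₀, hf_top]
  have hST : S ^ a * T ^ b ≠ 0 := mul_ne_zero hSa (by simp [hg₀, hg_top])
  have hdiv (p q : ℝ≥0∞) : (p / S) ^ a * (q / T) ^ b = p ^ a * q ^ b / (S ^ a * T ^ b) := by
    rw [ENNReal.div_rpow_of_nonneg _ _ ha.le, ENNReal.div_rpow_of_nonneg _ _ hb.le,
      ENNReal.mul_div_mul_comm (.inl hSa) (.inl (by finiteness))]
  have hnormalized : ENNReal.ofReal a * (∫⁻ x, f x / S) + ENNReal.ofReal b * (∫⁻ x, g x / T) ≤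
      ∫⁻ x, h x / (S ^ a * T ^ b) := by
    refine lintegral_add_lintegral_le_of_iSup_eq ha hb hab (hf.div_const S) (hg.div_const T)
      (hh.div_const _) ?_ fun x y ↦ ?_
    · rw [← ENNReal.iSup_div, ← ENNReal.iSup_div, ENNReal.div_self hf₀ hf_top,
        ENNReal.div_self hg₀ hg_top]
    · rw [hdiv]
      gcongr
      exact hfgh x y
  have hint {u : ℝ → ℝ≥0∞} (hu : Measurable u) (c : ℝ≥0∞) :
      ∫⁻ x, u x / c = (∫⁻ x, u x) / c := by
    simp only [div_eq_mul_inv, lintegral_mul_const _ hu]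
  have hquot : (∫⁻ x, f x) ^ a * (∫⁻ x, g x) ^ b / (S ^ a * T ^ b) ≤
      (∫⁻ x, h x) / (S ^ a * T ^ b) :=
    calc (∫⁻ x, f x) ^ a * (∫⁻ x, g x) ^ b / (S ^ a * T ^ b)
        = (∫⁻ x, f x / S) ^ a * (∫⁻ x, g x / T) ^ b := by
          rw [← hdiv, hint hf, hint hg]
      _ ≤ ENNReal.ofReal a * (∫⁻ x, f x / S) + ENNReal.ofReal b * (∫⁻ x, g x / T) :=
          ennreal_geom_mean_le_arith_mean2_weighted ha hb hab _ _
      _ ≤ ∫⁻ x, h x / (S ^ a * T ^ b) := hnormalized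
      _ = (∫⁻ x, h x) / (S ^ a * T ^ b) := hint hh _
  rwa [div_eq_mul_inv, div_eq_mul_inv,
    ENNReal.mul_le_mul_iff_left (ENNReal.inv_ne_zero.2 (by finiteness))
      (ENNReal.inv_ne_top.2 hST)] at hquot

end Real

/-- The Prékopa–Leindler property of a measure: the integral form of log-concavity, stable under
linear images and products. All integrals are lower Lebesgue integrals with values in `ℝ≥0∞`, so
that no integrability is needed; the endpoint weights `0` and `1` are excluded because of
`0 ^ 0 = 1`. -/
def SatisfiesPrekopaLeindler {E : Type*} [AddCommGroup E] [Module ℝ E] [MeasurableSpace E]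
    (μ : Measure E) : Prop :=
  ∀ ⦃a b : ℝ⦄, 0 < a → 0 < b → a + b = 1 → ∀ ⦃f g h : E → ℝ≥0∞⦄,
    Measurable f → Measurable g → Measurable h →
    (∀ x y, f x ^ a * g y ^ b ≤ h (a • x + b • y)) →
      (∫⁻ x, f x ∂μ) ^ a * (∫⁻ x, g x ∂μ) ^ b ≤ ∫⁻ x, h x ∂μ

theorem satisfiesPrekopaLeindler_volume_real :
    SatisfiesPrekopaLeindler (volume : Measure ℝ) := by
  intro a b ha hb hab f g h hf hg hh hfgh
  have hbdd (M N : ℕ) : (∫⁻ x, min (f x) M) ^ a * (∫⁻ x, min (g x) N) ^ b ≤ ∫⁻ x, h x := by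
    have hsup_ne_top (u : ℝ → ℝ≥0∞) (k : ℕ) : ⨆ x, min (u x) k ≠ ⊤ :=
      ne_top_of_le_ne_top (ENNReal.natCast_ne_top k) (iSup_le fun x ↦ min_le_right _ _)
    refine rpow_lintegral_mul_rpow_lintegral_le_of_iSup_ne_top ha hb hab
      (hf.min measurable_const) (hg.min measurable_const) hh (hsup_ne_top f M) (hsup_ne_top g N)
      fun x y ↦ le_trans ?_ (hfgh x y)
    gcongr <;> exact min_le_left _ _
  have hrpow_iSup {c : ℝ} (hc : 0 < c) (u : ℕ → ℝ≥0∞) : (⨆ k, u k) ^ c = ⨆ k, u k ^ c :=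
    (ENNReal.orderIsoRpow c hc).map_iSup u
  rw [lintegral_eq_iSup_lintegral_min_natCast hf, lintegral_eq_iSup_lintegral_min_natCast hg,
    hrpow_iSup ha, hrpow_iSup hb, ENNReal.iSup_mul]
  simp only [ENNReal.mul_iSup]
  exact iSup₂_le hbdd

section Transfer

variable {E F : Type*} [AddCommGroup E] [Module ℝ E] [MeasurableSpace E]
  [AddCommGroup F] [Module ℝ F] [MeasurableSpace F] {μ : Measure E} {ν : Measure F}

namespace SatisfiesPrekopaLeindler

theorem smul (hμ : SatisfiesPrekopaLeindler μ) (c : ℝ≥0∞) :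
    SatisfiesPrekopaLeindler (c • μ) := by
  intro a b ha hb hab f g h hf hg hh hfgh
  simp only [lintegral_smul_measure, smul_eq_mul]
  calc (c * ∫⁻ x, f x ∂μ) ^ a * (c * ∫⁻ x, g x ∂μ) ^ b
      = c ^ (a + b) * ((∫⁻ x, f x ∂μ) ^ a * (∫⁻ x, g x ∂μ) ^ b) := by
        rw [ENNReal.mul_rpow_of_nonneg _ _ ha.le, ENNReal.mul_rpow_of_nonneg _ _ hb.le,
          mul_mul_mul_comm, ENNReal.rpow_add_of_nonneg _ _ ha.le hb.le]
    _ ≤ c * ∫⁻ x, h x ∂μ := by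
        rw [hab, ENNReal.rpow_one]
        gcongr
        exact hμ ha hb hab hf hg hh hfgh

theorem map (hμ : SatisfiesPrekopaLeindler μ) {L : E →ₗ[ℝ] F} (hL : Measurable L) :
    SatisfiesPrekopaLeindler (μ.map L) := by
  intro a b ha hb hab f g h hf hg hh hfgh
  rw [lintegral_map hf hL, lintegral_map hg hL, lintegral_map hh hL]
  refine hμ ha hb hab (hf.comp hL) (hg.comp hL) (hh.comp hL) fun x y ↦ ?_
  rw [map_add, map_smul, map_smul]
  exact hfgh (L x) (L y)

theorem prod [SFinite ν] (hμ : SatisfiesPrekopaLeindler μ) (hν : SatisfiesPrekopaLeindler ν) :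
    SatisfiesPrekopaLeindler (μ.prod ν) := by
  intro a b ha hb hab f g h hf hg hh hfgh
  rw [lintegral_prod f hf.aemeasurable, lintegral_prod g hg.aemeasurable,
    lintegral_prod h hh.aemeasurable]
  exact hμ ha hb hab hf.lintegral_prod_right' hg.lintegral_prod_right' hh.lintegral_prod_right'
    fun s t ↦ hν ha hb hab (hf.comp measurable_prodMk_left) (hg.comp measurable_prodMk_left)
      (hh.comp measurable_prodMk_left) fun x y ↦ hfgh (s, x) (t, y)

end SatisfiesPrekopaLeindler

theorem satisfiesPrekopaLeindler_dirac_zero :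
    SatisfiesPrekopaLeindler (Measure.dirac (0 : E)) := by
  intro a b _ _ _ f g h hf hg hh hfgh
  simpa [lintegral_dirac' _ hf, lintegral_dirac' _ hg, lintegral_dirac' _ hh] using hfgh 0 0

end Transfer

section Haar

variable {E F : Type*} [NormedAddCommGroup E] [NormedSpace ℝ E] [FiniteDimensional ℝ E]
  [MeasurableSpace E] [BorelSpace E] [NormedAddCommGroup F] [NormedSpace ℝ F] [MeasurableSpace F]
  [BorelSpace F]

theorem SatisfiesPrekopaLeindler.addHaar_of_continuousLinearEquiv {ν : Measure F}
    [ν.IsAddHaarMeasure] (hν : SatisfiesPrekopaLeindler ν) (e : F ≃L[ℝ] E) (μ : Measure E)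
    [μ.IsAddHaarMeasure] : SatisfiesPrekopaLeindler μ := by
  have : (ν.map e).IsAddHaarMeasure := e.isAddHaarMeasure_map ν
  rw [Measure.isAddLeftInvariant_eq_smul μ (ν.map e)]
  exact (hν.map (L := (e : F →ₗ[ℝ] E)) e.continuous.measurable).smul _

theorem satisfiesPrekopaLeindler_volume_pi (n : ℕ) :
    SatisfiesPrekopaLeindler (volume : Measure (Fin n → ℝ)) := by
  induction n with
  | zero =>
    rw [Measure.volume_pi_eq_dirac 0]
    exact satisfiesPrekopaLeindler_dirac_zero
  | succ n ih =>
    exact (satisfiesPrekopaLeindler_volume_real.prod ih).addHaar_of_continuousLinearEquiv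
      (.ofFinrankEq (by simp [add_comm])) _

variable (μ : Measure E) [μ.IsAddHaarMeasure]

theorem satisfiesPrekopaLeindler_addHaar : SatisfiesPrekopaLeindler μ :=
  (satisfiesPrekopaLeindler_volume_pi (Module.finrank ℝ E)).addHaar_of_continuousLinearEquiv
    (.ofFinrankEq (by simp)) μ

theorem rpow_setLIntegral_mul_rpow_setLIntegral_le {K : Set E} (hK : Convex ℝ K) {a b : ℝ}
    (ha : 0 < a) (hb : 0 < b) (hab : a + b = 1) {f g h : E → ℝ≥0∞} (hf : Measurable f)
    (hg : Measurable g) (hh : Measurable h)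
    (hfgh : ∀ x ∈ K, ∀ y ∈ K, f x ^ a * g y ^ b ≤ h (a • x + b • y)) :
    (∫⁻ x in K, f x ∂μ) ^ a * (∫⁻ x in K, g x ∂μ) ^ b ≤ ∫⁻ x in K, h x ∂μ := by
  have hint : K =ᵐ[μ] interior K :=
    (interior_ae_eq_of_null_frontier (hK.addHaar_frontier μ)).symm
  have hmeas : MeasurableSet (interior K) := isOpen_interior.measurableSet
  simp only [setLIntegral_congr hint, ← lintegral_indicator hmeas]
  refine satisfiesPrekopaLeindler_addHaar μ ha hb hab (hf.indicator hmeas) (hg.indicator hmeas)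
    (hh.indicator hmeas) fun x y ↦ ?_
  by_cases hx : x ∈ interior K
  · by_cases hy : y ∈ interior K
    · simpa only [indicator_of_mem, hx, hy, hK.interior hx hy ha.le hb.le hab] using
        hfgh x (interior_subset hx) y (interior_subset hy)
    · simp [hy, hb]
  · simp [hx, ha]

end Haar

theorem sq_add_mul_div_add_mul_le {a b : ℝ} (ha : 0 < a) (hb : 0 < b) {u v : ℝ} (hu : 0 < u)
    (hv : 0 < v) (p q : ℝ) :
    (a * p + b * q) ^ 2 / (a * u + b * v) ≤ a * (p ^ 2 / u) + b * (q ^ 2 / v) := by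
  have hpos : ∀ i ∈ Finset.univ, 0 < ![a * u, b * v] i := by
    simp only [Finset.mem_univ, forall_const, Fin.forall_fin_two]
    exact ⟨mul_pos ha hu, mul_pos hb hv⟩
  have hsedrakyan := Finset.sq_sum_div_le_sum_sq_div Finset.univ ![a * p, b * q] hpos
  simp only [Fin.sum_univ_two, Matrix.cons_val_zero, Matrix.cons_val_one] at hsedrakyan
  refine hsedrakyan.trans_eq ?_
  field_simp

section NormedSpace

variable {E : Type*} [SeminormedAddCommGroup E] [NormedSpace ℝ E] {a b u v : ℝ}

theorem norm_smul_add_smul_sq_div_le (ha : 0 < a) (hb : 0 < b) (hu : 0 < u) (hv : 0 < v)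
    (x y : E) :
    ‖a • x + b • y‖ ^ 2 / (a * u + b * v) ≤ a * (‖x‖ ^ 2 / u) + b * (‖y‖ ^ 2 / v) := by
  have hnorm : ‖a • x + b • y‖ ≤ a * ‖x‖ + b * ‖y‖ := by
    simpa only [norm_smul, Real.norm_of_nonneg ha.le, Real.norm_of_nonneg hb.le] using
      norm_add_le (a • x) (b • y)
  calc ‖a • x + b • y‖ ^ 2 / (a * u + b * v)
      ≤ (a * ‖x‖ + b * ‖y‖) ^ 2 / (a * u + b * v) := by gcongr
    _ ≤ a * (‖x‖ ^ 2 / u) + b * (‖y‖ ^ 2 / v) := sq_add_mul_div_add_mul_le ha hb hu hv _ _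

theorem rpow_exp_mul_rpow_exp_le_exp_norm_smul_add_smul (ha : 0 < a) (hb : 0 < b) (hu : 0 < u)
    (hv : 0 < v) (x y : E) :
    Real.exp (-‖x‖ ^ 2 / (2 * u)) ^ a * Real.exp (-‖y‖ ^ 2 / (2 * v)) ^ b ≤
      Real.exp (-‖a • x + b • y‖ ^ 2 / (2 * (a * u + b * v))) := by
  have hhalf (p w : ℝ) : -p / (2 * w) = -(p / w) / 2 := by ring
  rw [← Real.exp_mul, ← Real.exp_mul, ← Real.exp_add, Real.exp_le_exp, hhalf, hhalf, hhalf]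
  linarith [norm_smul_add_smul_sq_div_le ha hb hu hv x y]

end NormedSpace

/-- The integral `F(s) = ∫_K exp(-‖x‖² / (2s)) dμ(x)` of the unnormalized Gaussian of variance `s`
over `K`, as a Bochner integral: its value is `0` when the Gaussian is not integrable on `K`. -/
noncomputable def gaussianIntegral {E : Type*} [Norm E] [MeasurableSpace E] (μ : Measure E)
    (K : Set E) (s : ℝ) : ℝ :=
  ∫ x in K, Real.exp (-‖x‖ ^ 2 / (2 * s)) ∂μ

theorem gaussianIntegral_nonneg {E : Type*} [Norm E] [MeasurableSpace E] {μ : Measure E}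
    {K : Set E} {s : ℝ} : 0 ≤ gaussianIntegral μ K s :=
  integral_nonneg fun _ ↦ Real.exp_nonneg _

section OpensMeasurableSpace

variable {E : Type*} [SeminormedAddCommGroup E] [MeasurableSpace E] [OpensMeasurableSpace E]
  {μ : Measure E} {K : Set E} {s t : ℝ}

theorem integrableOn_exp_neg_norm_sq_div (hKμ : μ K ≠ ⊤) (hs : 0 ≤ s) :
    IntegrableOn (fun x ↦ Real.exp (-‖x‖ ^ 2 / (2 * s))) K μ := by
  refine Measure.integrableOn_of_bounded (M := 1) hKμ (by fun_prop) (.of_forall fun x ↦ ?_)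
  rw [Real.norm_of_nonneg (Real.exp_nonneg _), Real.exp_le_one_iff, neg_div, neg_nonpos]
  positivity

theorem gaussianIntegral_pos (hKμ : μ K ≠ ⊤) (hKμ₀ : μ K ≠ 0) (hs : 0 ≤ s) :
    0 < gaussianIntegral μ K s := by
  have : NeZero (μ.restrict K) := ⟨mt Measure.restrict_eq_zero.1 hKμ₀⟩
  exact integral_exp_pos (integrableOn_exp_neg_norm_sq_div hKμ hs)

theorem ofReal_gaussianIntegral (hKμ : μ K ≠ ⊤) (hs : 0 ≤ s) :
    ENNReal.ofReal (gaussianIntegral μ K s) =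
      ∫⁻ x in K, ENNReal.ofReal (Real.exp (-‖x‖ ^ 2 / (2 * s))) ∂μ :=
  ofReal_integral_eq_lintegral_ofReal (integrableOn_exp_neg_norm_sq_div hKμ hs)
    (.of_forall fun _ ↦ Real.exp_nonneg _)

theorem gaussianIntegral_le_exp_mul (hKm : NullMeasurableSet K μ) (hKμ : μ K ≠ ⊤) {R : ℝ}
    (hKR : K ⊆ Metric.closedBall 0 R) (hs : 0 < s) (hst : s ≤ t) :
    gaussianIntegral μ K t ≤
      Real.exp (R ^ 2 / 2 * (1 / s - 1 / t)) * gaussianIntegral μ K s := by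
  rw [gaussianIntegral, gaussianIntegral, ← integral_const_mul]
  refine setIntegral_mono_on₀ (integrableOn_exp_neg_norm_sq_div hKμ (hs.le.trans hst))
    ((integrableOn_exp_neg_norm_sq_div hKμ hs.le).const_mul _) hKm fun x hx ↦ ?_
  have hxR : ‖x‖ ≤ R := mem_closedBall_zero_iff.1 (hKR hx)
  have hinv : 0 ≤ 1 / s - 1 / t := sub_nonneg.2 (one_div_le_one_div_of_le hs hst)
  rw [← Real.exp_add, Real.exp_le_exp]
  calc -‖x‖ ^ 2 / (2 * t)
      = ‖x‖ ^ 2 / 2 * (1 / s - 1 / t) + -‖x‖ ^ 2 / (2 * s) := by ring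
    _ ≤ R ^ 2 / 2 * (1 / s - 1 / t) + -‖x‖ ^ 2 / (2 * s) := by gcongr

end OpensMeasurableSpace

theorem exp_div_four_lt_one_add {t : ℝ} (ht₀ : 0 < t) (ht₁ : t ≤ 1) :
    Real.exp (t / 4) < 1 + t := by
  have hexp := Real.abs_exp_sub_one_sub_id_le (x := t / 4) (abs_le.2 ⟨by linarith, by linarith⟩)
  nlinarith [le_of_abs_le hexp]

section LogConcavity

variable {E : Type*} [NormedAddCommGroup E] [NormedSpace ℝ E] [FiniteDimensional ℝ E]
  [MeasurableSpace E] [BorelSpace E] (μ : Measure E) [μ.IsAddHaarMeasure] {K : Set E}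
  {s u v : ℝ}

theorem rpow_gaussianIntegral_mul_rpow_gaussianIntegral_le (hK : Convex ℝ K) (hKμ : μ K ≠ ⊤)
    {a b : ℝ} (ha : 0 < a) (hb : 0 < b) (hab : a + b = 1) (hu : 0 < u) (hv : 0 < v) :
    gaussianIntegral μ K u ^ a * gaussianIntegral μ K v ^ b ≤
      gaussianIntegral μ K (a * u + b * v) := by
  rw [← ENNReal.ofReal_le_ofReal_iff gaussianIntegral_nonneg,
    ENNReal.ofReal_mul (Real.rpow_nonneg gaussianIntegral_nonneg _),
    ← ENNReal.ofReal_rpow_of_nonneg gaussianIntegral_nonneg ha.le,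
    ← ENNReal.ofReal_rpow_of_nonneg gaussianIntegral_nonneg hb.le,
    ofReal_gaussianIntegral hKμ hu.le, ofReal_gaussianIntegral hKμ hv.le,
    ofReal_gaussianIntegral hKμ (by positivity)]
  refine rpow_setLIntegral_mul_rpow_setLIntegral_le μ hK ha hb hab (by fun_prop) (by fun_prop)
    (by fun_prop) fun x _ y _ ↦ ?_
  rw [ENNReal.ofReal_rpow_of_nonneg (Real.exp_nonneg _) ha.le,
    ENNReal.ofReal_rpow_of_nonneg (Real.exp_nonneg _) hb.le, ← ENNReal.ofReal_mul (by positivity)]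
  exact ENNReal.ofReal_le_ofReal (rpow_exp_mul_rpow_exp_le_exp_norm_smul_add_smul ha hb hu hv x y)

theorem gaussianIntegral_mul_le_sq (hK : Convex ℝ K) (hKμ : μ K ≠ ⊤) (hu : 0 < u) (hv : 0 < v) :
    gaussianIntegral μ K u * gaussianIntegral μ K v ≤ gaussianIntegral μ K ((u + v) / 2) ^ 2 := by
  have hsqrt : √(gaussianIntegral μ K u * gaussianIntegral μ K v) ≤
      gaussianIntegral μ K ((u + v) / 2) := by
    rw [Real.sqrt_mul gaussianIntegral_nonneg, Real.sqrt_eq_rpow, Real.sqrt_eq_rpow]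
    convert rpow_gaussianIntegral_mul_rpow_gaussianIntegral_le μ hK hKμ one_half_pos
      one_half_pos (add_halves 1) hu hv using 2
    ring
  exact (Real.sqrt_le_left gaussianIntegral_nonneg).1 hsqrt

theorem gaussianIntegral_mul_le_exp_mul_sq (hK : Convex ℝ K) {R : ℝ}
    (hKR : K ⊆ Metric.closedBall 0 R) (hs : 0 < s) {α : ℝ} (hα : |α| < 1) :
    gaussianIntegral μ K (s / (1 + α)) * gaussianIntegral μ K (s / (1 - α)) ≤
      Real.exp (α ^ 2 * R ^ 2 / s) * gaussianIntegral μ K s ^ 2 := by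
  have hKμ : μ K ≠ ⊤ := (Metric.isBounded_closedBall.subset hKR).measure_lt_top.ne
  have h₁ : 0 < 1 + α := by linarith [neg_lt_of_abs_lt hα]
  have h₂ : 0 < 1 - α := by linarith [lt_of_abs_lt hα]
  have hα2 : 0 < 1 - α ^ 2 := by linarith [(sq_lt_one_iff_abs_lt_one α).2 hα]
  have hmean : (s / (1 + α) + s / (1 - α)) / 2 = s / (1 - α ^ 2) := by
    rw [show 1 - α ^ 2 = (1 + α) * (1 - α) by ring]
    field_simp
    ring
  have hexp : R ^ 2 / 2 * (1 / s - 1 / (s / (1 - α ^ 2))) = α ^ 2 * R ^ 2 / (2 * s) := by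
    field_simp
    ring
  calc gaussianIntegral μ K (s / (1 + α)) * gaussianIntegral μ K (s / (1 - α))
      ≤ gaussianIntegral μ K (s / (1 - α ^ 2)) ^ 2 :=
        hmean ▸ gaussianIntegral_mul_le_sq μ hK hKμ (div_pos hs h₁) (div_pos hs h₂)
    _ ≤ (Real.exp (α ^ 2 * R ^ 2 / (2 * s)) * gaussianIntegral μ K s) ^ 2 := by
        gcongr
        · exact gaussianIntegral_nonneg
        · exact hexp ▸ gaussianIntegral_le_exp_mul (hK.nullMeasurableSet μ) hKμ hKR hs
            (le_div_self hs.le hα2 (sub_le_self 1 (sq_nonneg α)))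
    _ = Real.exp (α ^ 2 * R ^ 2 / s) * gaussianIntegral μ K s ^ 2 := by
        rw [mul_pow, ← Real.exp_nat_mul]
        congr 2
        push_cast
        field_simp

theorem accelerated_rate_variance_bound_general (hK : Convex ℝ K)
    (hKint : (interior K).Nonempty) {R : ℝ} (hKR : K ⊆ Metric.closedBall 0 R) (hs : 0 < s)
    (hsR : s ≤ R ^ 2) :
    gaussianIntegral μ K (s / (1 + s / (2 * R ^ 2))) *
        gaussianIntegral μ K (s / (1 - s / (2 * R ^ 2))) <
      (1 + s / R ^ 2) * gaussianIntegral μ K s ^ 2 := by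
  have hR2 : 0 < R ^ 2 := hs.trans_le hsR
  have hF := gaussianIntegral_pos (μ := μ)
    ((Metric.isBounded_closedBall.subset hKR).measure_lt_top.ne)
    (Measure.measure_pos_of_nonempty_interior μ hKint).ne' hs.le
  have hα : |s / (2 * R ^ 2)| < 1 := by
    rw [abs_of_pos (by positivity), div_lt_one (by positivity)]
    linarith
  have hexp : (s / (2 * R ^ 2)) ^ 2 * R ^ 2 / s = s / R ^ 2 / 4 := by
    field_simp
    ring
  calc gaussianIntegral μ K (s / (1 + s / (2 * R ^ 2))) *
        gaussianIntegral μ K (s / (1 - s / (2 * R ^ 2)))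
      ≤ Real.exp (s / R ^ 2 / 4) * gaussianIntegral μ K s ^ 2 :=
        hexp ▸ gaussianIntegral_mul_le_exp_mul_sq μ hK hKR hs hα
    _ < (1 + s / R ^ 2) * gaussianIntegral μ K s ^ 2 := by
        gcongr
        exact exp_div_four_lt_one_add (by positivity) ((div_le_one hR2).2 hsR)

end LogConcavity

/-- Variance bound at the accelerated cooling rate `α = σ²/(2C²n)`: for a
convex body `K ⊆ C√n·B_n` and `σ² ≤ C²n`, with
`F(s) = ∫_K exp(-‖x‖²/(2s)) dx`,
`F(σ²/(1+α))·F(σ²/(1-α)) < (1 + σ²/(C²n))·F(σ²)²`. -/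
theorem accelerated_rate_variance_bound
    (n : ℕ) (hn : 1 ≤ n) (C : ℝ) (hC : 0 < C)
    (K : Set (EuclideanSpace ℝ (Fin n)))
    (hKconv : Convex ℝ K) (hKcomp : IsCompact K) (hKint : (interior K).Nonempty)
    (hKsub : K ⊆ Metric.closedBall 0 (C * Real.sqrt n))
    (σ : ℝ) (hσ : 0 < σ) (hσ2 : σ ^ 2 ≤ C ^ 2 * n) :
    (∫ x in K, Real.exp (-‖x‖ ^ 2 / (2 * (σ ^ 2 / (1 + σ ^ 2 / (2 * C ^ 2 * n)))))) *
      (∫ x in K, Real.exp (-‖x‖ ^ 2 / (2 * (σ ^ 2 / (1 - σ ^ 2 / (2 * C ^ 2 * n)))))) <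
    (1 + σ ^ 2 / (C ^ 2 * n)) *
      (∫ x in K, Real.exp (-‖x‖ ^ 2 / (2 * σ ^ 2))) ^ 2 := by
  have hR : (C * √n) ^ 2 = C ^ 2 * n := by rw [mul_pow, Real.sq_sqrt n.cast_nonneg]
  simpa only [gaussianIntegral, hR, ← mul_assoc] using
    accelerated_rate_variance_bound_general volume hKconv hKint hKsub (pow_pos hσ 2) (hR ▸ hσ2)
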